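/- arXiv:2009.08568 — 4 statements merged into one kernel-verified Lean document; each statement's English description precedes it below -/
import Mathlib

section
/- Let B be the Moore–Penrose pseudoinverse of A, let G be the Moore–Penrose pseudoinverse of AAᵀ, let Ω be a symmetric p×p real matrix, and define V = {s ∈ ℝ^p : B s ≤ 0 and ‖Ω G s‖₁ ≤ 1}. Then the image set G·V = {G s : s ∈ V} is nonempty, closed, convex, contains no lines, and the zero vector is one of its extreme points. -/
open Matrix

theorem pinv_aux (p d : ℕ) (A : Matrix (Fin p) (Fin d) ℝ) (B : Matrix (Fin d) (Fin p) ℝ)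
    (G : Matrix (Fin p) (Fin p) ℝ)
    (hB1 : A * B * A = A) (hB2 : B * A * B = B)
    (hB3 : (A * B)ᵀ = A * B) (hB4 : (B * A)ᵀ = B * A)
    (hG1 : A * Aᵀ * G * (A * Aᵀ) = A * Aᵀ)
    (hG3 : (A * Aᵀ * G)ᵀ = A * Aᵀ * G) : Aᵀ * G = B := by
  have h0 : (A * Aᵀ * G * A - A) * Aᵀ = 0 := by
    rw [Matrix.sub_mul, Matrix.mul_assoc _ A, hG1, sub_self]
  have h1 : (A * Aᵀ * G * A - A) * (A * Aᵀ * G * A - A)ᴴ = 0 := by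
    rw [Matrix.conjTranspose_eq_transpose_of_trivial, Matrix.transpose_sub,
      Matrix.transpose_mul _ A, Matrix.mul_sub, ← Matrix.mul_assoc, h0]
    simp
  have h2 : A * Aᵀ * G * A = A := sub_eq_zero.mp (Matrix.self_mul_conjTranspose_eq_zero.mp h1)
  have h3 : A * B = A * Aᵀ * G := by
    calc A * B = (A * B)ᵀ := hB3.symm
      _ = (A * Aᵀ * G * A * B)ᵀ := by rw [h2]
      _ = (A * B)ᵀ * (A * Aᵀ * G)ᵀ := by rw [Matrix.mul_assoc _ A B, Matrix.transpose_mul]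
      _ = A * B * A * (Aᵀ * G) := by rw [hB3, hG3]; simp only [Matrix.mul_assoc]
      _ = _ := by rw [hB1, Matrix.mul_assoc]
  symm
  calc B = B * (A * B) := by rw [← Matrix.mul_assoc, hB2]
    _ = (B * A)ᵀ * Aᵀ * G := by rw [h3, hB4]; simp only [Matrix.mul_assoc]
    _ = (A * (B * A))ᵀ * G := by rw [Matrix.transpose_mul A]
    _ = Aᵀ * G := by rw [← Matrix.mul_assoc, hB1]

/-- Supplemental Lemma (lm:Vpoly): for `B` the Moore–Penrose pseudoinverse of `A`, `G` the
Moore–Penrose pseudoinverse of `A Aᵀ`, and a symmetric matrix `Ω`, the image under `G` of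
`V = {s : B s ≤ 0, ‖Ω G s‖₁ ≤ 1}` is nonempty, closed, convex, contains no lines, and has
the zero vector among its extreme points. -/
theorem stmt_6 (p d : ℕ) (A : Matrix (Fin p) (Fin d) ℝ) (B : Matrix (Fin d) (Fin p) ℝ)
    (G Ω : Matrix (Fin p) (Fin p) ℝ)
    (hB1 : A * B * A = A) (hB2 : B * A * B = B)
    (hB3 : (A * B)ᵀ = A * B) (hB4 : (B * A)ᵀ = B * A)
    (hG1 : A * Aᵀ * G * (A * Aᵀ) = A * Aᵀ) (hG2 : G * (A * Aᵀ) * G = G)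
    (hG3 : (A * Aᵀ * G)ᵀ = A * Aᵀ * G) (hG4 : (G * (A * Aᵀ))ᵀ = G * (A * Aᵀ))
    (hΩ : Ωᵀ = Ω)
    (V : Set (Fin p → ℝ))
    (hV : V = {s | (∀ i, B.mulVec s i ≤ 0) ∧ ∑ i, |Ω.mulVec (G.mulVec s) i| ≤ 1}) :
    (G.mulVec '' V).Nonempty ∧ IsClosed (G.mulVec '' V) ∧ Convex ℝ (G.mulVec '' V) ∧
      (¬ ∃ x ∈ G.mulVec '' V, ∃ v : Fin p → ℝ, v ≠ 0 ∧ ∀ t : ℝ, x + t • v ∈ G.mulVec '' V) ∧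
      (0 : Fin p → ℝ) ∈ Set.extremePoints ℝ (G.mulVec '' V) := by
  have hAG := pinv_aux p d A B G hB1 hB2 hB3 hB4 hG1 hG3
  have hW : G.mulVec '' V = {x | (G * (A * Aᵀ)).mulVec x = x ∧ (∀ i, Aᵀ.mulVec x i ≤ 0) ∧
      ∑ i, |Ω.mulVec x i| ≤ 1} := by
    ext x
    subst hV
    constructor
    · rintro ⟨s, ⟨h1, h2⟩, rfl⟩
      refine ⟨by rw [Matrix.mulVec_mulVec, hG2], ?_, h2⟩
      rw [Matrix.mulVec_mulVec, hAG]
      exact h1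
    · rintro ⟨h0, h1, h2⟩
      have h3 : G.mulVec ((A * Aᵀ).mulVec x) = x := by rw [Matrix.mulVec_mulVec, h0]
      refine ⟨(A * Aᵀ).mulVec x, ⟨?_, ?_⟩, h3⟩
      · rw [← hAG, ← Matrix.mulVec_mulVec, h3]
        exact h1
      · rw [h3]
        exact h2
  rw [hW]
  have key : ∀ v : Fin p → ℝ, (G * (A * Aᵀ)).mulVec v = v → Aᵀ.mulVec v = 0 → v = 0 := by
    intro v h1 h2
    rw [← h1, ← Matrix.mul_assoc, ← Matrix.mulVec_mulVec, h2, Matrix.mulVec_zero]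
  refine ⟨⟨0, by simp⟩, ?_, ?_, ?_, ?_⟩
  · refine IsClosed.inter (isClosed_eq (by fun_prop) (by fun_prop)) (IsClosed.inter ?_ ?_)
    · have : {x : Fin p → ℝ | ∀ i, Aᵀ.mulVec x i ≤ 0} = ⋂ i, {x | Aᵀ.mulVec x i ≤ 0} := by
        ext x; simp
      change IsClosed {x : Fin p → ℝ | ∀ i, Aᵀ.mulVec x i ≤ 0}
      rw [this]
      exact isClosed_iInter fun i => isClosed_le (by fun_prop) (by fun_prop)
    · change IsClosed {x : Fin p → ℝ | ∑ i, |Ω.mulVec x i| ≤ 1}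
      exact isClosed_le (by fun_prop) (by fun_prop)
  · rintro x ⟨x0, x1, x2⟩ y ⟨y0, y1, y2⟩ a b ha hb hab
    refine ⟨by simp only [Matrix.mulVec_add, Matrix.mulVec_smul, x0, y0], fun i => ?_, ?_⟩
    · simp only [Matrix.mulVec_add, Matrix.mulVec_smul, Pi.add_apply, Pi.smul_apply, smul_eq_mul]
      nlinarith [mul_nonneg ha (neg_nonneg.mpr (x1 i)), mul_nonneg hb (neg_nonneg.mpr (y1 i))]
    · simp only [Matrix.mulVec_add, Matrix.mulVec_smul, Pi.add_apply, Pi.smul_apply, smul_eq_mul]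
      calc _ ≤ ∑ i, (a * |Ω.mulVec x i| + b * |Ω.mulVec y i|) := by
            refine Finset.sum_le_sum fun i _ => (abs_add_le _ _).trans ?_
            rw [abs_mul, abs_mul, abs_of_nonneg ha, abs_of_nonneg hb]
        _ = a * ∑ i, |Ω.mulVec x i| + b * ∑ i, |Ω.mulVec y i| := by
            rw [Finset.sum_add_distrib, Finset.mul_sum, Finset.mul_sum]
        _ ≤ a * 1 + b * 1 := by gcongr
        _ = 1 := by linarith
  · rintro ⟨x, ⟨x0, x1, -⟩, v, hv, h⟩
    apply hv
    apply key
    · have := (h 1).1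
      rw [one_smul, Matrix.mulVec_add, x0] at this
      exact add_left_cancel this
    · ext i
      by_contra hne
      have hne : Aᵀ.mulVec v i ≠ 0 := hne
      have := (h ((1 - Aᵀ.mulVec x i) / Aᵀ.mulVec v i)).2.1 i
      simp only [Matrix.mulVec_add, Matrix.mulVec_smul, Pi.add_apply, Pi.smul_apply,
        smul_eq_mul, div_mul_cancel₀ _ hne] at this
      linarith
  · refine ⟨by simp, ?_⟩
    rintro x ⟨x0, x1, -⟩ y ⟨y0, y1, -⟩ ⟨a, b, ha, hb, hab, h⟩
    apply key x x0
    ext i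
    have h' := congrFun (congrArg Aᵀ.mulVec h) i
    simp only [Matrix.mulVec_add, Matrix.mulVec_smul, Pi.add_apply, Pi.smul_apply,
        smul_eq_mul, Matrix.mulVec_zero, Pi.zero_apply] at h' ⊢
    have hx := x1 i
    have hy := mul_nonneg hb.le (neg_nonneg.mpr (y1 i))
    by_contra hne
    have : 0 < a * (-(Aᵀ.mulVec x i)) := mul_pos ha (neg_pos.mpr (lt_of_le_of_ne hx hne))
    linarith
end

section
/- Let Z = (Z₁,…,Z_d) ∈ ℝ^d be jointly Gaussian with E[Z_j] ≥ 0 and Var(Z_j) = σ² > 0 for all 1 ≤ j ≤ d, let S = max_{1≤j≤d} Z_j, and let m be a median of S. Then the distribution of S is absolutely continuous with respect to Lebesgue measure, and it admits a density that is bounded on all of ℝ by (2/σ)·max{m/σ, 1}. -/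
open MeasureTheory ProbabilityTheory
open scoped NNReal ENNReal

lemma bm_aux (K L C : Set ℝ) (hK : IsCompact K) (hL : IsCompact L) (hKn : K.Nonempty)
    (hLn : L.Nonempty) (h : ∀ x ∈ K, ∀ y ∈ L, (x + y) / 2 ∈ C) (hC : MeasurableSet C) :
    volume K + volume L ≤ 2 * volume C := by
  set k := sSup K
  set l := sInf L
  have hk : k ∈ K := hK.sSup_mem hKn
  have hl : l ∈ L := hL.sInf_mem hLn
  set D : Set ℝ := {z | (2:ℝ)⁻¹ * z ∈ C} with hD
  have hDm : MeasurableSet D := (measurable_const_mul (2:ℝ)⁻¹) hC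
  have hDv : volume D = 2 * volume C := by
    have := Real.volume_preimage_mul_left (a := (2:ℝ)⁻¹) (by norm_num) C
    rw [hD]
    change volume ((fun x => (2:ℝ)⁻¹ * x) ⁻¹' C) = _
    rw [this]
    norm_num
  have h1 : volume K ≤ volume (D ∩ Set.Iic (k + l)) := by
    rw [← measure_preimage_add_right volume l (D ∩ Set.Iic (k + l))]
    apply measure_mono
    intro x hx
    refine ⟨?_, ?_⟩
    · have := h x hx l hl
      simp only [D, Set.mem_ofPred_eq]
      convert this using 1; ring
    · have : x ≤ k := le_csSup hK.bddAbove hx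
      simp only [Set.mem_Iic]; linarith
  have h2 : volume L ≤ volume (D ∩ Set.Ici (k + l)) := by
    rw [← measure_preimage_add volume k (D ∩ Set.Ici (k + l))]
    apply measure_mono
    intro x hx
    refine ⟨?_, ?_⟩
    · have := h k hk x hx
      simp only [D, Set.mem_ofPred_eq]
      convert this using 1; ring
    · have : l ≤ x := csInf_le hL.bddBelow hx
      simp only [Set.mem_Ici]; linarith
  have h3 : volume (D ∩ Set.Ici (k + l)) = volume (D \ Set.Iic (k + l)) := by
    apply measure_congr
    have : D \ Set.Iic (k+l) = D ∩ Set.Ioi (k+l) := by ext; simp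
    rw [this]
    exact (Filter.EventuallyEq.refl _ D).inter Ioi_ae_eq_Ici.symm
  rw [← hDv, ← measure_inter_add_sdiff D (measurableSet_Iic (a := k + l)), ← h3]
  exact add_le_add h1 h2

lemma bm (A B C : Set ℝ) (hA : MeasurableSet A) (hB : MeasurableSet B) (hAn : A.Nonempty)
    (hBn : B.Nonempty) (h : ∀ x ∈ A, ∀ y ∈ B, (x + y) / 2 ∈ C) (hC : MeasurableSet C) :
    volume A + volume B ≤ 2 * volume C := by
  obtain ⟨a, ha⟩ := hAn
  obtain ⟨b, hb⟩ := hBn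
  rw [hA.measure_eq_iSup_isCompact, hB.measure_eq_iSup_isCompact]
  simp only [iSup_and']
  refine ENNReal.biSup_add_biSup_le' (p := fun K => K ⊆ A ∧ IsCompact K)
    (q := fun K => K ⊆ B ∧ IsCompact K) ⟨∅, by simp⟩ ⟨∅, by simp⟩ ?_
  rintro K ⟨hKA, hK⟩ L ⟨hLB, hL⟩
  calc volume K + volume L ≤ volume (insert a K) + volume (insert b L) := by
        gcongr <;> exact Set.subset_insert _ _
    _ ≤ _ := by
      apply bm_aux _ _ _ (hK.insert a) (hL.insert b) ⟨a, by simp⟩ ⟨b, by simp⟩ _ hC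
      intro x hx y hy
      exact h x (Set.insert_subset ha hKA hx) y (Set.insert_subset hb hLB hy)

lemma pl_norm (f g h : ℝ → ℝ) (hf : Measurable f) (hg : Measurable g) (hh : Measurable h)
    (f0 : ∀ x, 0 ≤ f x) (g0 : ∀ x, 0 ≤ g x) (h0 : ∀ x, 0 ≤ h x)
    (f1 : ∀ x, f x ≤ 1) (g1 : ∀ x, g x ≤ 1)
    (fs : ∀ t < 1, ∃ x, t < f x) (gs : ∀ t < 1, ∃ x, t < g x)
    (H : ∀ x y, f x * g y ≤ h ((x + y) / 2) ^ 2) :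
    (∫⁻ x, ENNReal.ofReal (f x)) + (∫⁻ x, ENNReal.ofReal (g x)) ≤
      2 * ∫⁻ x, ENNReal.ofReal (h x) := by
  rw [lintegral_eq_lintegral_meas_lt _ (Filter.Eventually.of_forall f0) hf.aemeasurable,
    lintegral_eq_lintegral_meas_lt _ (Filter.Eventually.of_forall g0) hg.aemeasurable,
    lintegral_eq_lintegral_meas_lt _ (Filter.Eventually.of_forall h0) hh.aemeasurable]
  have hmeas : ∀ u : ℝ → ℝ, Measurable (fun t : ℝ => volume {a : ℝ | t < u a}) := by
    intro u
    apply Antitone.measurable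
    intro s t hst
    exact measure_mono (fun a ha => lt_of_le_of_lt hst ha)
  rw [← lintegral_add_left (hmeas f), ← lintegral_const_mul _ (hmeas h)]
  apply setLIntegral_mono ((hmeas h).const_mul _)
  intro t ht
  rcases lt_or_ge t 1 with h1 | h1
  · apply bm _ _ _ (measurableSet_lt measurable_const hf) (measurableSet_lt measurable_const hg)
      (fs t h1) (gs t h1) _ (measurableSet_lt measurable_const hh)
    intro x hx y hy
    simp only [Set.mem_ofPred_eq, Set.mem_Ioi] at *
    by_contra hc
    push Not at hc
    have := H x y
    have h2 := h0 ((x + y) / 2)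
    nlinarith [mul_pos (sub_pos.2 hx) (sub_pos.2 hy), mul_pos ht (sub_pos.2 hx), mul_pos ht (sub_pos.2 hy)]
  · have e1 : {a | t < f a} = ∅ := by
      ext a; simp; linarith [f1 a]
    have e2 : {a | t < g a} = ∅ := by
      ext a; simp; linarith [g1 a]
    rw [e1, e2]; simp

lemma amgm (A B C : ℝ≥0∞) (h : A + B ≤ 2 * C) : A * B ≤ C ^ 2 := by
  by_cases hC : C = ∞
  · simp [hC]
  have hA : A ≠ ∞ := by
    intro hA; rw [hA] at h; simp at h; exact absurd h (ENNReal.mul_ne_top (by simp) hC)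
  have hB : B ≠ ∞ := by
    intro hA; rw [hA] at h; simp at h; exact absurd h (ENNReal.mul_ne_top (by simp) hC)
  lift A to ℝ≥0 using hA
  lift B to ℝ≥0 using hB
  lift C to ℝ≥0 using hC
  norm_cast at *
  have h' : (A:ℝ) + B ≤ 2 * C := by exact_mod_cast h
  have : (A:ℝ) * B ≤ C ^ 2 := by
    have := A.2; have := B.2; have := C.2
    nlinarith [sq_nonneg ((A:ℝ) - B), NNReal.coe_nonneg A, NNReal.coe_nonneg B, NNReal.coe_nonneg C]
  exact_mod_cast this

lemma pl_real (f g h : ℝ → ℝ) (hf : Measurable f) (hg : Measurable g) (hh : Measurable h)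
    (f0 : ∀ x, 0 ≤ f x) (g0 : ∀ x, 0 ≤ g x) (h0 : ∀ x, 0 ≤ h x)
    (f1 : ∀ x, f x ≤ 1) (g1 : ∀ x, g x ≤ 1)
    (H : ∀ x y, f x * g y ≤ h ((x + y) / 2) ^ 2) :
    (∫⁻ x, ENNReal.ofReal (f x)) * (∫⁻ x, ENNReal.ofReal (g x)) ≤
      (∫⁻ x, ENNReal.ofReal (h x)) ^ 2 := by
  have bf : BddAbove (Set.range f) := ⟨1, by rintro _ ⟨x, rfl⟩; exact f1 x⟩
  have bg : BddAbove (Set.range g) := ⟨1, by rintro _ ⟨x, rfl⟩; exact g1 x⟩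
  set a := ⨆ x, f x with ha
  set b := ⨆ x, g x with hb
  have fa : ∀ x, f x ≤ a := fun x => le_ciSup bf x
  have gb : ∀ x, g x ≤ b := fun x => le_ciSup bg x
  rcases ((f0 0).trans (fa 0)).eq_or_lt with ha0 | ha0
  · have : ∀ x, f x = 0 := fun x => le_antisymm (by rw [ha0]; exact fa x) (f0 x)
    simp [this]
  rcases ((g0 0).trans (gb 0)).eq_or_lt with hb0 | hb0
  · have : ∀ x, g x = 0 := fun x => le_antisymm (by rw [hb0]; exact gb x) (g0 x)
    simp [this]
  have hs : 0 < Real.sqrt (a * b) := Real.sqrt_pos.2 (mul_pos ha0 hb0)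
  have key := pl_norm (fun x => a⁻¹ * f x) (fun x => b⁻¹ * g x)
    (fun x => (Real.sqrt (a * b))⁻¹ * h x) (by fun_prop) (by fun_prop) (by fun_prop)
    (fun x => mul_nonneg (by positivity) (f0 x)) (fun x => mul_nonneg (by positivity) (g0 x))
    (fun x => mul_nonneg (by positivity) (h0 x))
    (fun x => by rw [inv_mul_le_iff₀ ha0]; simpa using fa x)
    (fun x => by rw [inv_mul_le_iff₀ hb0]; simpa using gb x)
    (fun t ht => by
      obtain ⟨x, hx⟩ := exists_lt_of_lt_ciSup (show a * t < ⨆ x, f x by rw [← ha]; nlinarith)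
      exact ⟨x, by rw [lt_inv_mul_iff₀ ha0]; exact hx⟩)
    (fun t ht => by
      obtain ⟨x, hx⟩ := exists_lt_of_lt_ciSup (show b * t < ⨆ x, g x by rw [← hb]; nlinarith)
      exact ⟨x, by rw [lt_inv_mul_iff₀ hb0]; exact hx⟩)
    (fun x y => by
      rw [mul_pow, inv_pow, Real.sq_sqrt (by positivity)]
      calc a⁻¹ * f x * (b⁻¹ * g y) = (a * b)⁻¹ * (f x * g y) := by
            rw [mul_inv]; ring
        _ ≤ _ := by gcongr; exact H x y)
  have key2 := amgm _ _ _ key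
  have e : ∀ (c : ℝ) (u : ℝ → ℝ), 0 < c → Measurable u →
      ∫⁻ x, ENNReal.ofReal (c⁻¹ * u x) = ENNReal.ofReal c⁻¹ * ∫⁻ x, ENNReal.ofReal (u x) := by
    intro c u hc hu
    rw [← lintegral_const_mul _ (by fun_prop)]
    congr with x
    rw [ENNReal.ofReal_mul (by positivity)]
  rw [e a f ha0 hf, e b g hb0 hg, e _ h hs hh, mul_pow, ← ENNReal.ofReal_pow (by positivity),
    inv_pow, Real.sq_sqrt (by positivity), mul_mul_mul_comm,
    ← ENNReal.ofReal_mul (by positivity), ← mul_inv] at key2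
  rwa [ENNReal.mul_le_mul_iff_right] at key2
  · simp; positivity
  · simp


/-- Prékopa–Leindler property (midpoint version, functions bounded by one). -/
def PLM {E : Type*} [MeasurableSpace E] [AddCommGroup E] [Module ℝ E] (μ : Measure E) : Prop :=
  ∀ f g h : E → ℝ≥0∞, Measurable f → Measurable g → Measurable h →
    (∀ x, f x ≤ 1) → (∀ x, g x ≤ 1) → (∀ x, h x ≤ 1) →
    (∀ x y, f x * g y ≤ h ((1 / 2 : ℝ) • (x + y)) ^ 2) →
    (∫⁻ x, f x ∂μ) * (∫⁻ x, g x ∂μ) ≤ (∫⁻ x, h x ∂μ) ^ 2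

lemma pdf_le_one (μ x : ℝ) : gaussianPDFReal μ 1 x ≤ 1 := by
  unfold gaussianPDFReal
  have h1 : (1:ℝ) ≤ Real.sqrt (2 * Real.pi * (1:ℝ≥0)) := by
    rw [Real.one_le_sqrt]; simp; nlinarith [Real.pi_gt_three]
  have h2 : Real.exp (-(x - μ) ^ 2 / (2 * (1:ℝ≥0))) ≤ 1 := by
    rw [Real.exp_le_one_iff]; simp; nlinarith [sq_nonneg (x - μ)]
  exact mul_le_one₀ (inv_le_one_of_one_le₀ h1) (Real.exp_nonneg _) h2

lemma pdf_mid (x y : ℝ) : gaussianPDFReal 0 1 x * gaussianPDFReal 0 1 y ≤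
    gaussianPDFReal 0 1 ((x + y) / 2) ^ 2 := by
  unfold gaussianPDFReal
  set c := (Real.sqrt (2 * Real.pi * (1:ℝ≥0)))⁻¹
  have : Real.exp (-(x - 0) ^ 2 / (2 * (1:ℝ≥0))) * Real.exp (-(y - 0) ^ 2 / (2 * (1:ℝ≥0)))
      ≤ Real.exp (-((x + y) / 2 - 0) ^ 2 / (2 * (1:ℝ≥0))) ^ 2 := by
    rw [← Real.exp_add, ← Real.exp_nat_mul]
    apply Real.exp_le_exp.2
    simp
    nlinarith [sq_nonneg (x - y)]
  calc _ = c ^ 2 * (Real.exp (-(x - 0) ^ 2 / (2 * (1:ℝ≥0))) * Real.exp (-(y - 0) ^ 2 / (2 * (1:ℝ≥0)))) := by ring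
    _ ≤ c ^ 2 * Real.exp (-((x + y) / 2 - 0) ^ 2 / (2 * (1:ℝ≥0))) ^ 2 := by gcongr
    _ = _ := by ring

lemma plm_gauss : PLM (gaussianReal 0 1) := by
  intro f g h hf hg hh f1 g1 h1 H
  have e : ∀ u : ℝ → ℝ≥0∞, Measurable u → (∀ x, u x ≤ 1) → ∫⁻ x, u x ∂(gaussianReal 0 1) =
      ∫⁻ x, ENNReal.ofReal (gaussianPDFReal 0 1 x * (u x).toReal) := by
    intro u hu u1
    rw [gaussianReal_of_var_ne_zero _ one_ne_zero,
      lintegral_withDensity_eq_lintegral_mul _ (measurable_gaussianPDF 0 1) hu]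
    congr with x
    have : u x ≠ ∞ := ne_top_of_le_ne_top ENNReal.one_ne_top (u1 x)
    rw [ENNReal.ofReal_mul (gaussianPDFReal_nonneg 0 1 x), ENNReal.ofReal_toReal this]
    rfl
  have t1 : ∀ u : ℝ → ℝ≥0∞, (∀ x, u x ≤ 1) → ∀ x, (u x).toReal ≤ 1 := by
    intro u u1 x
    exact ENNReal.toReal_le_of_le_ofReal zero_le_one (by simpa using u1 x)
  have pn := gaussianPDFReal_nonneg 0 1
  have pm := measurable_gaussianPDFReal 0 1
  rw [e f hf f1, e g hg g1, e h hh h1]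
  apply pl_real
  · exact pm.mul hf.ennreal_toReal
  · exact pm.mul hg.ennreal_toReal
  · exact pm.mul hh.ennreal_toReal
  · exact fun x => mul_nonneg (pn x) ENNReal.toReal_nonneg
  · exact fun x => mul_nonneg (pn x) ENNReal.toReal_nonneg
  · exact fun x => mul_nonneg (pn x) ENNReal.toReal_nonneg
  · exact fun x => mul_le_one₀ (pdf_le_one 0 x) ENNReal.toReal_nonneg (t1 f f1 x)
  · exact fun x => mul_le_one₀ (pdf_le_one 0 x) ENNReal.toReal_nonneg (t1 g g1 x)
  · intro x y
    have h2 : (f x).toReal * (g y).toReal ≤ (h ((x + y) / 2)).toReal ^ 2 := by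
      rw [← ENNReal.toReal_mul, ← ENNReal.toReal_pow]
      apply ENNReal.toReal_mono
      · exact ENNReal.pow_ne_top (ne_top_of_le_ne_top ENNReal.one_ne_top (h1 _))
      · have := H x y
        rwa [smul_eq_mul, show (1/2 : ℝ) * (x + y) = (x + y) / 2 by ring] at this
    calc _ = (gaussianPDFReal 0 1 x * gaussianPDFReal 0 1 y) * ((f x).toReal * (g y).toReal) := by ring
      _ ≤ (gaussianPDFReal 0 1 ((x + y) / 2) ^ 2) * (h ((x + y) / 2)).toReal ^ 2 := by
        apply mul_le_mul (pdf_mid x y) h2 (mul_nonneg ENNReal.toReal_nonneg ENNReal.toReal_nonneg)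
          (sq_nonneg _)
      _ = _ := by ring

lemma plm_prod {E F : Type*} [MeasurableSpace E] [AddCommGroup E] [Module ℝ E]
    [MeasurableSpace F] [AddCommGroup F] [Module ℝ F] (μ : Measure E) (ν : Measure F)
    [IsProbabilityMeasure μ] [IsProbabilityMeasure ν] (hμ : PLM μ) (hν : PLM ν) :
    PLM (μ.prod ν) := by
  intro f g h hf hg hh f1 g1 h1 H
  have b : ∀ u : E × F → ℝ≥0∞, (∀ x, u x ≤ 1) → ∀ x, ∫⁻ y, u (x, y) ∂ν ≤ 1 := by
    intro u u1 x
    calc _ ≤ ∫⁻ y, 1 ∂ν := lintegral_mono (fun y => u1 _)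
      _ = 1 := by simp
  rw [lintegral_prod _ hf.aemeasurable, lintegral_prod _ hg.aemeasurable,
    lintegral_prod _ hh.aemeasurable]
  apply hμ _ _ _ hf.lintegral_prod_right' hg.lintegral_prod_right' hh.lintegral_prod_right'
    (b f f1) (b g g1) (b h h1)
  intro x y
  apply hν (fun z => f (x, z)) (fun z => g (y, z)) (fun z => h ((1 / 2 : ℝ) • (x + y), z))
    (by fun_prop) (by fun_prop) (by fun_prop) (fun _ => f1 _) (fun _ => g1 _) (fun _ => h1 _)
  intro z w
  exact H (x, z) (y, w)

lemma plm_map {E F : Type*} [MeasurableSpace E] [AddCommGroup E] [Module ℝ E]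
    [MeasurableSpace F] [AddCommGroup F] [Module ℝ F] (μ : Measure E) (T : E → F)
    (hT : Measurable T) (hT' : ∀ x y, T ((1 / 2 : ℝ) • (x + y)) = (1 / 2 : ℝ) • (T x + T y))
    (hμ : PLM μ) : PLM (μ.map T) := by
  intro f g h hf hg hh f1 g1 h1 H
  rw [lintegral_map hf hT, lintegral_map hg hT, lintegral_map hh hT]
  apply hμ _ _ _ (hf.comp hT) (hg.comp hT) (hh.comp hT) (fun _ => f1 _) (fun _ => g1 _)
    (fun _ => h1 _)
  intro x y
  simp only [Function.comp_apply, hT']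
  exact H _ _

lemma plm_pi (n : ℕ) : PLM (Measure.pi (fun _ : Fin n => gaussianReal 0 1)) := by
  induction n with
  | zero =>
    intro f g h hf hg hh f1 g1 h1 H
    have e : ∀ u : (Fin 0 → ℝ) → ℝ≥0∞, Measurable u →
        ∫⁻ x, u x ∂(Measure.pi (fun _ : Fin 0 => gaussianReal 0 1)) = u 0 := by
      intro u hu
      have : ∀ x, u x = u 0 := fun x => by rw [Subsingleton.elim x 0]
      simp [this]
    rw [e f hf, e g hg, e h hh]
    have := H 0 0
    simpa using this
  | succ n ih =>
    have hp := measurePreserving_piFinSuccAbove (fun _ : Fin (n+1) => gaussianReal 0 1) 0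
    have hp' := hp.symm
    rw [← hp'.map_eq]
    apply plm_map _ _ (MeasurableEquiv.measurable _)
    · intro x y
      ext i
      refine Fin.cases ?_ (fun i => ?_) i <;> simp [MeasurableEquiv.piFinSuccAbove] <;> ring
    · exact plm_prod _ _ plm_gauss ih

lemma plm_gaussian {d : ℕ} (ν : Measure (EuclideanSpace ℝ (Fin d))) [IsGaussian ν] :
    PLM ν := by
  classical
  set S : Matrix (Fin d) (Fin d) ℝ := Matrix.of fun i j => covarianceBilin ν
    (EuclideanSpace.basisFun (Fin d) ℝ i) (EuclideanSpace.basisFun (Fin d) ℝ j) with hS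
  have hbil : ∀ x y : EuclideanSpace ℝ (Fin d), covarianceBilin ν x y =
      x.ofLp ⬝ᵥ Matrix.mulVec S y.ofLp := by
    intro x y
    conv_lhs => rw [← (EuclideanSpace.basisFun _ ℝ).sum_repr x,
      ← (EuclideanSpace.basisFun _ ℝ).sum_repr y]
    simp [dotProduct, Matrix.mulVec, hS, Finset.mul_sum]
    rw [Finset.sum_comm]
    congr with i
    congr with j
    ring
  have hSp : S.PosSemidef := by
    refine Matrix.PosSemidef.of_dotProduct_mulVec_nonneg ?_ ?_
    · ext i j
      simp [hS, covarianceBilin_comm]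
    · intro x
      have := hbil (WithLp.toLp 2 x) (WithLp.toLp 2 x)
      simp only [star_trivial]
      rw [← this]
      exact covarianceBilin_self_nonneg _
  have hν : ν = multivariateGaussian (∫ x, x ∂ν) S := by
    apply IsGaussian.ext
    · simp
    · ext x y
      rw [covarianceBilin_multivariateGaussian hSp, hbil]
  rw [hν]
  unfold multivariateGaussian
  apply plm_map _ _ (by fun_prop)
  · intro x y
    simp only [map_smul, map_add, smul_add]
    module
  · rw [← map_pi_eq_stdGaussian]
    apply plm_map _ _ (by fun_prop)
    · intro x y; simp
    · exact plm_pi d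


lemma pdf_std (t : ℝ) : gaussianPDFReal 0 1 t =
    (Real.sqrt (2 * Real.pi))⁻¹ * Real.exp (-t ^ 2 / 2) := by
  unfold gaussianPDFReal; simp

lemma pdf_deriv (t : ℝ) : HasDerivAt (gaussianPDFReal 0 1) (-t * gaussianPDFReal 0 1 t) t := by
  have h : gaussianPDFReal 0 1 = fun t =>
    (Real.sqrt (2 * Real.pi))⁻¹ * Real.exp (-t ^ 2 / 2) := funext pdf_std
  rw [h]
  have h1 : HasDerivAt (fun t : ℝ => -t ^ 2 / 2) (-t) t := by
    refine HasDerivAt.congr_deriv (((hasDerivAt_pow 2 t).neg).div_const 2) ?_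
    push_cast; ring
  refine HasDerivAt.congr_deriv ((h1.exp).const_mul ((Real.sqrt (2 * Real.pi))⁻¹)) ?_
  ring

lemma pdf_tendsto : Filter.Tendsto (gaussianPDFReal 0 1) Filter.atTop (nhds 0) := by
  have h : gaussianPDFReal 0 1 = fun t =>
    (Real.sqrt (2 * Real.pi))⁻¹ * Real.exp (-t ^ 2 / 2) := funext pdf_std
  rw [h]
  have h2 : Filter.Tendsto (fun t : ℝ => t ^ 2 / 2) Filter.atTop Filter.atTop :=
    (Filter.tendsto_pow_atTop (by norm_num)).atTop_div_const (by norm_num)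
  have h3 := (Real.tendsto_exp_neg_atTop_nhds_zero.comp h2).const_mul
    ((Real.sqrt (2 * Real.pi))⁻¹)
  simp only [mul_zero] at h3
  refine h3.congr fun t => ?_
  simp [neg_div]

lemma real_Ioi (w : ℝ) : (gaussianReal 0 1).real (Set.Ioi w) =
    ∫ t in Set.Ioi w, gaussianPDFReal 0 1 t := by
  rw [measureReal_def, gaussianReal_apply_eq_integral _ one_ne_zero, ENNReal.toReal_ofReal]
  exact integral_nonneg (fun x => gaussianPDFReal_nonneg _ _ _)

lemma mills0 (w : ℝ) (hw : 0 ≤ w) : gaussianPDFReal 0 1 w ≤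
    (1 + w) * (gaussianReal 0 1).real (Set.Ioi w) := by
  set p := gaussianPDFReal 0 1 with hp
  have p0 : ∀ t, 0 ≤ p t := gaussianPDFReal_nonneg 0 1
  set g' : ℝ → ℝ := fun t => (-t * p t * (1 + t) - p t * 1) / (1 + t) ^ 2
  have hd : ∀ t ∈ Set.Ici w, HasDerivAt (fun t => p t / (1 + t)) (g' t) t := by
    intro t ht
    have : 0 ≤ t := hw.trans ht
    exact (pdf_deriv t).div ((hasDerivAt_id t).const_add 1) (by simp; positivity)
  have hneg : ∀ t ∈ Set.Ioi w, g' t ≤ 0 := by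
    intro t ht
    have : 0 ≤ t := hw.trans (le_of_lt ht)
    apply div_nonpos_of_nonpos_of_nonneg _ (by positivity)
    have := p0 t
    have : 0 ≤ t * p t * (1 + t) := by positivity
    linarith
  have hlim : Filter.Tendsto (fun t => p t / (1 + t)) Filter.atTop (nhds 0) :=
    pdf_tendsto.div_atTop (Filter.tendsto_atTop_add_const_left _ _ Filter.tendsto_id)
  have hint := integral_Ioi_of_hasDerivAt_of_nonpos' hd hneg hlim
  have hi := integrableOn_Ioi_deriv_of_nonpos' hd hneg hlim
  have hle : ∫ t in Set.Ioi w, - g' t ≤ ∫ t in Set.Ioi w, p t := by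
    apply setIntegral_mono_on hi.neg (integrable_gaussianPDFReal 0 1).integrableOn
      measurableSet_Ioi
    intro t ht
    have h0 : 0 ≤ t := hw.trans (le_of_lt ht)
    change -((-t * p t * (1 + t) - p t * 1) / (1 + t) ^ 2) ≤ p t
    rw [← neg_div, div_le_iff₀ (by positivity)]
    nlinarith [mul_nonneg (p0 t) h0]
  rw [integral_neg, hint] at hle
  rw [real_Ioi]
  have h1 : p w / (1 + w) ≤ ∫ t in Set.Ioi w, p t := by linarith
  rw [div_le_iff₀ (by positivity)] at h1
  linarith

lemma mills (w : ℝ) : gaussianPDFReal 0 1 w ≤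
    2 * max w 1 * (gaussianReal 0 1).real (Set.Ioi w) := by
  have hn : 0 ≤ (gaussianReal 0 1).real (Set.Ioi w) := measureReal_nonneg
  rcases le_or_gt 0 w with h | h
  · refine (mills0 w h).trans ?_
    gcongr
    have := le_max_left w 1
    have := le_max_right w 1
    linarith
  · calc gaussianPDFReal 0 1 w ≤ gaussianPDFReal 0 1 0 := by
          rw [pdf_std, pdf_std]
          apply mul_le_mul_of_nonneg_left _ (by positivity)
          apply Real.exp_le_exp.2
          nlinarith [sq_nonneg w]
      _ ≤ (1 + 0) * (gaussianReal 0 1).real (Set.Ioi 0) := mills0 0 le_rfl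
      _ ≤ 2 * max w 1 * (gaussianReal 0 1).real (Set.Ioi w) := by
        have := le_max_right w 1
        apply mul_le_mul _ _ measureReal_nonneg (by positivity)
        · linarith
        · exact measureReal_mono (Set.Ioi_subset_Ioi h.le)

lemma mills_shift (μ z : ℝ) (hμ : 0 ≤ μ) : gaussianPDFReal μ 1 z ≤
    2 * max z 1 * (gaussianReal μ 1).real (Set.Ioi z) := by
  have h1 : gaussianPDFReal μ 1 z = gaussianPDFReal 0 1 (z - μ) := by
    unfold gaussianPDFReal; simp
  have h2 : (gaussianReal μ 1).real (Set.Ioi z) = (gaussianReal 0 1).real (Set.Ioi (z - μ)) := by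
    have := gaussianReal_map_add_const (μ := 0) (v := 1) μ
    rw [zero_add] at this
    rw [← this, measureReal_def, Measure.map_apply (by fun_prop) measurableSet_Ioi, measureReal_def]
    congr 2
    ext; simp [sub_lt_iff_lt_add]
  rw [h1, h2]
  refine (mills _).trans ?_
  gcongr
  linarith

lemma hazard1 (μ x y : ℝ) (hμ : 0 ≤ μ) (U : Set ℝ) (hU : IsUpperSet U) :
    gaussianReal μ 1 (U ∩ Set.Ioc x y) ≤
      ENNReal.ofReal (2 * max y 1 * (y - x)) * gaussianReal μ 1 (U ∩ Set.Ioi x) := by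
  set ν := gaussianReal μ 1 with hν
  rw [hν, gaussianReal_apply _ one_ne_zero, ← hν]
  calc ∫⁻ z in U ∩ Set.Ioc x y, gaussianPDF μ 1 z
      ≤ ∫⁻ z in U ∩ Set.Ioc x y, ENNReal.ofReal (2 * max y 1) * ν (U ∩ Set.Ioi x) := by
        apply setLIntegral_mono (by fun_prop)
        rintro z ⟨hz, hz1, hz2⟩
        have h1 : ν (Set.Ioi z) ≤ ν (U ∩ Set.Ioi x) := by
          apply measure_mono
          intro t ht
          exact ⟨hU (le_of_lt ht) hz, lt_trans hz1 ht⟩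
        calc gaussianPDF μ 1 z ≤ ENNReal.ofReal (2 * max z 1 * ν.real (Set.Ioi z)) :=
              ENNReal.ofReal_le_ofReal (mills_shift μ z hμ)
          _ = ENNReal.ofReal (2 * max z 1) * ν (Set.Ioi z) := by
              rw [ENNReal.ofReal_mul (by positivity), measureReal_def, ENNReal.ofReal_toReal (by simp)]
          _ ≤ _ := by gcongr
    _ = ENNReal.ofReal (2 * max y 1) * ν (U ∩ Set.Ioi x) * volume (U ∩ Set.Ioc x y) := by
        rw [setLIntegral_const]
    _ ≤ ENNReal.ofReal (2 * max y 1) * ν (U ∩ Set.Ioi x) * ENNReal.ofReal (y - x) := by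
        gcongr
        rw [← Real.volume_Ioc]
        exact measure_mono Set.inter_subset_right
    _ = _ := by
        rw [ENNReal.ofReal_mul (p := 2 * max y 1) (by positivity)]; ring


/-- The event that `j` is the first index at which the maximum is attained. -/
def firstMax {Ω : Type*} {d : ℕ} (Z : Ω → Fin d → ℝ) (j : Fin d) : Set Ω :=
  {ω | (∀ i, Z ω i ≤ Z ω j) ∧ ∀ i, i < j → Z ω i < Z ω j}

lemma hazard_j {Ω : Type*} {mΩ : MeasurableSpace Ω} {P : Measure Ω} [IsProbabilityMeasure P]
    {d : ℕ} {Z : Ω → Fin d → ℝ} (hZ : Measurable Z) (hG : HasGaussianLaw Z P)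
    (hmean : ∀ j, 0 ≤ ∫ ω, Z ω j ∂P) (hvar : ∀ j, Var[fun ω => Z ω j; P] = 1)
    (j : Fin d) (x y : ℝ) :
    P (firstMax Z j ∩ {ω | Z ω j ∈ Set.Ioc x y}) ≤
      ENNReal.ofReal (2 * max y 1 * (y - x)) * P (firstMax Z j ∩ {ω | Z ω j ∈ Set.Ioi x}) := by
  have hZi : ∀ i, Measurable (fun ω => Z ω i) := fun i => (measurable_pi_apply i).comp hZ
  have hGi : ∀ i, HasGaussianLaw (fun ω => Z ω i) P := fun i => hG.eval (X := fun i ω => Z ω i) i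
  have hL2 : ∀ i, MemLp (fun ω => Z ω i) 2 P := fun i => (hGi i).memLp_two
  set ρ : Fin d → ℝ := fun i => cov[fun ω => Z ω i, fun ω => Z ω j; P] with hρ
  have hρ1 : ∀ i, ρ i ≤ 1 := by
    intro i
    have h := variance_fun_sub (hL2 i) (hL2 j)
    have h0 := variance_nonneg (fun ω => Z ω i - Z ω j) P
    rw [h, hvar, hvar] at h0
    linarith
  set W : Ω → Fin d → ℝ := fun ω i => Z ω i - ρ i * Z ω j with hW
  have hWm : Measurable W := by
    rw [measurable_pi_iff]
    intro i
    exact (hZi i).sub ((hZi j).const_mul _)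
  have hind : IndepFun W (fun ω => Z ω j) P := by
    have h1 : HasGaussianLaw (fun ω => (fun i => W ω i, fun _ : Unit => Z ω j)) P := by
      let L : (Fin d → ℝ) →L[ℝ] (Fin d → ℝ) × (Unit → ℝ) :=
        ContinuousLinearMap.prod
          (ContinuousLinearMap.pi fun i => ContinuousLinearMap.proj (R := ℝ) (φ := fun _ : Fin d => ℝ) i
            - ρ i • ContinuousLinearMap.proj (R := ℝ) (φ := fun _ : Fin d => ℝ) j)
          (ContinuousLinearMap.pi fun _ => ContinuousLinearMap.proj (R := ℝ) (φ := fun _ : Fin d => ℝ) j)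
      exact hG.map_fun L
    have h2 := h1.indepFun_of_covariance_eval (X := fun i ω => W ω i) (Y := fun _ ω => Z ω j) ?_
    · exact h2.comp (φ := id) (ψ := fun u : Unit → ℝ => u ()) measurable_id (by fun_prop)
    · intro i _
      simp only [hW]
      rw [covariance_fun_sub_left (hL2 i) ((hL2 j).const_mul _) (hL2 j),
        covariance_const_mul_left, covariance_self (hZi j).aemeasurable, hvar]
      simp [hρ]
  have hlaw : P.map (fun ω => Z ω j) = gaussianReal (∫ ω, Z ω j ∂P) 1 := by
    rw [(hGi j).map_eq_gaussianReal, hvar]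
    simp
  have hprod : P.map (fun ω => (W ω, Z ω j)) =
      (P.map W).prod (gaussianReal (∫ ω, Z ω j ∂P) 1) := by
    rw [← hlaw]
    exact (indepFun_iff_map_prod_eq_prod_map_map hWm.aemeasurable (hZi j).aemeasurable).1 hind
  set U : (Fin d → ℝ) → Set ℝ := fun v =>
    {z | (∀ i, v i ≤ (1 - ρ i) * z) ∧ ∀ i, i < j → v i < (1 - ρ i) * z} with hU
  have hUup : ∀ v, IsUpperSet (U v) := by
    intro v a b hab ha
    have hm : ∀ i, (1 - ρ i) * a ≤ (1 - ρ i) * b := fun i =>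
      mul_le_mul_of_nonneg_left hab (by linarith [hρ1 i])
    exact ⟨fun i => (ha.1 i).trans (hm i), fun i hi => (ha.2 i hi).trans_le (hm i)⟩
  have hAm : MeasurableSet {p : (Fin d → ℝ) × ℝ | p.2 ∈ U p.1} := by
    have : {p : (Fin d → ℝ) × ℝ | p.2 ∈ U p.1} =
      (⋂ i, {p : (Fin d → ℝ) × ℝ | p.1 i ≤ (1 - ρ i) * p.2}) ∩
      (⋂ i, ⋂ (_ : i < j), {p : (Fin d → ℝ) × ℝ | p.1 i < (1 - ρ i) * p.2}) := by
      ext p; simp [hU]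
    rw [this]
    refine MeasurableSet.inter (MeasurableSet.iInter fun i => ?_)
      (MeasurableSet.iInter fun i => MeasurableSet.iInter fun _ => ?_)
    · exact measurableSet_le (by fun_prop) (by fun_prop)
    · exact measurableSet_lt (by fun_prop) (by fun_prop)
  have key : ∀ B : Set ℝ, MeasurableSet B → P (firstMax Z j ∩ {ω | Z ω j ∈ B}) =
      ∫⁻ v, gaussianReal (∫ ω, Z ω j ∂P) 1 (U v ∩ B) ∂(P.map W) := by
    intro B hB
    have hm : MeasurableSet ({p : (Fin d → ℝ) × ℝ | p.2 ∈ U p.1} ∩ Prod.snd ⁻¹' B) :=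
      hAm.inter (measurable_snd hB)
    have h1 : firstMax Z j ∩ {ω | Z ω j ∈ B} = (fun ω => (W ω, Z ω j)) ⁻¹'
        ({p : (Fin d → ℝ) × ℝ | p.2 ∈ U p.1} ∩ Prod.snd ⁻¹' B) := by
      ext ω
      have e1 : ∀ i, Z ω i - ρ i * Z ω j ≤ (1 - ρ i) * Z ω j ↔ Z ω i ≤ Z ω j := by
        intro i; constructor <;> intro h <;> linarith
      have e2 : ∀ i, Z ω i - ρ i * Z ω j < (1 - ρ i) * Z ω j ↔ Z ω i < Z ω j := by
        intro i; constructor <;> intro h <;> linarith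
      simp only [firstMax, hU, hW, Set.mem_inter_iff, Set.mem_ofPred_eq, Set.mem_preimage, e1, e2]
    rw [h1, ← Measure.map_apply (hWm.prodMk (hZi j)) hm, hprod, Measure.prod_apply hm]
    rfl
  rw [key _ measurableSet_Ioc, key _ measurableSet_Ioi, ← lintegral_const_mul' _ _ ENNReal.ofReal_ne_top]
  exact lintegral_mono fun v => hazard1 _ _ _ (hmean j) _ (hUup v)

lemma exists_firstMax {Ω : Type*} {d : ℕ} (hd : 1 ≤ d) (Z : Ω → Fin d → ℝ) (ω : Ω) :
    ∃ j, ω ∈ firstMax Z j := by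
  classical
  have : Nonempty (Fin d) := ⟨⟨0, hd⟩⟩
  obtain ⟨k, hk⟩ := Finite.exists_max (Z ω)
  set s : Finset (Fin d) := Finset.univ.filter fun i => ∀ l, Z ω l ≤ Z ω i
  have hs : s.Nonempty := ⟨k, by simp [s]; exact hk⟩
  have hj := s.min'_mem hs
  refine ⟨s.min' hs, (Finset.mem_filter.1 hj).2, fun i hi => ?_⟩
  by_contra hc
  push Not at hc
  have : i ∈ s := Finset.mem_filter.2 ⟨Finset.mem_univ _, fun l =>
    ((Finset.mem_filter.1 hj).2 l).trans hc⟩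
  exact absurd (s.min'_le i this) (not_le.2 hi)

lemma sup_firstMax {Ω : Type*} {d : ℕ} (Z : Ω → Fin d → ℝ) (ω : Ω) (j : Fin d)
    (h : ω ∈ firstMax Z j) : ⨆ i, Z ω i = Z ω j := by
  have : Nonempty (Fin d) := ⟨j⟩
  exact le_antisymm (ciSup_le h.1) (le_ciSup (f := Z ω) (Set.finite_range _).bddAbove j)

lemma hazardS {Ω : Type*} {mΩ : MeasurableSpace Ω} {P : Measure Ω} [IsProbabilityMeasure P]
    {d : ℕ} (hd : 1 ≤ d) {Z : Ω → Fin d → ℝ} (hZ : Measurable Z) (hG : HasGaussianLaw Z P)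
    (hmean : ∀ j, 0 ≤ ∫ ω, Z ω j ∂P) (hvar : ∀ j, Var[fun ω => Z ω j; P] = 1)
    (x y : ℝ) :
    P {ω | (⨆ j, Z ω j) ∈ Set.Ioc x y} ≤
      ENNReal.ofReal (2 * max y 1 * (y - x)) * P {ω | (⨆ j, Z ω j) ∈ Set.Ioi x} := by
  have hZi : ∀ i, Measurable (fun ω => Z ω i) := fun i => (measurable_pi_apply i).comp hZ
  have hFm : ∀ j, MeasurableSet (firstMax Z j) := by
    intro j
    have : firstMax Z j = (⋂ i, {ω | Z ω i ≤ Z ω j}) ∩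
      (⋂ i, ⋂ (_ : i < j), {ω | Z ω i < Z ω j}) := by
      ext p; simp [firstMax]
    rw [this]
    exact MeasurableSet.inter (MeasurableSet.iInter fun i => measurableSet_le (hZi i) (hZi j))
      (MeasurableSet.iInter fun i => MeasurableSet.iInter fun _ =>
        measurableSet_lt (hZi i) (hZi j))
  have hdisj : Pairwise (Function.onFun Disjoint fun j => firstMax Z j) := by
    intro i j hij
    rw [Function.onFun, Set.disjoint_left]
    intro ω hi hj
    rcases lt_or_gt_of_ne hij with h | h
    · exact absurd (hi.1 j) (not_le.2 (hj.2 i h))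
    · exact absurd (hj.1 i) (not_le.2 (hi.2 j h))
  have key : ∀ B : Set ℝ, MeasurableSet B → P {ω | (⨆ j, Z ω j) ∈ B} =
      ∑ j, P (firstMax Z j ∩ {ω | Z ω j ∈ B}) := by
    intro B hB
    have : {ω | (⨆ j, Z ω j) ∈ B} = ⋃ j, firstMax Z j ∩ {ω | Z ω j ∈ B} := by
      ext ω
      simp only [Set.mem_ofPred_eq, Set.mem_iUnion, Set.mem_inter_iff]
      constructor
      · intro h
        obtain ⟨j, hj⟩ := exists_firstMax hd Z ω
        exact ⟨j, hj, by rwa [← sup_firstMax Z ω j hj]⟩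
      · rintro ⟨j, hj, h⟩
        rwa [sup_firstMax Z ω j hj]
    rw [this, measure_iUnion, tsum_fintype]
    · intro i j hij
      exact (hdisj hij).mono Set.inter_subset_left Set.inter_subset_left
    · intro j
      exact (hFm j).inter (hZi j hB)
  rw [key _ measurableSet_Ioc, key _ measurableSet_Ioi, Finset.mul_sum]
  exact Finset.sum_le_sum fun j _ => hazard_j hZ hG hmean hvar j x y


lemma analytic_part (F : ℝ → ℝ) (mono : Monotone F) (F0 : ∀ x, 0 ≤ F x) (F1 : ∀ x, F x ≤ 1)
    (hz : ∀ x y, x ≤ y → F y - F x ≤ 2 * max y 1 * (y - x) * (1 - F x))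
    (lc : ∀ x h, F (x + h) * F (x - h) ≤ F x ^ 2) (m : ℝ) (hm : 1 / 2 ≤ F m) :
    ∀ x y, x ≤ y → F y ≤ F x + 2 * max m 1 * (y - x) := by
  set C := 2 * max m 1 with hC
  have hCpos : 0 < C := by positivity
  have hcont : Continuous F := by
    rw [continuous_iff_continuousAt]
    intro x
    refine continuousAt_of_locally_lipschitz (r := 1) one_pos (2 * max (x + 1) 1) ?_
    intro y hy
    rw [Real.dist_eq] at hy ⊢
    rw [Real.dist_eq]
    have hy' := abs_lt.1 hy
    have aux : ∀ a b, a ≤ b → b ≤ x + 1 → F b - F a ≤ 2 * max (x + 1) 1 * (b - a) := by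
      intro a b hab hb
      calc F b - F a ≤ 2 * max b 1 * (b - a) * (1 - F a) := hz a b hab
        _ ≤ 2 * max b 1 * (b - a) * 1 := by
          apply mul_le_mul_of_nonneg_left (by linarith [F0 a])
          apply mul_nonneg (by positivity) (by linarith)
        _ ≤ 2 * max (x + 1) 1 * (b - a) := by
          rw [mul_one]
          apply mul_le_mul_of_nonneg_right _ (by linarith)
          gcongr
    rcases le_total x y with h | h
    · rw [abs_of_nonneg (sub_nonneg.2 (mono h)), abs_of_nonneg (sub_nonneg.2 h)]
      exact aux x y h (by linarith)
    · rw [abs_of_nonpos (sub_nonpos.2 (mono h)), abs_of_nonpos (sub_nonpos.2 h)]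
      have := aux y x h (by linarith)
      linarith
  have chain : ∀ h : ℝ, 0 < h → ∀ k : ℕ,
      F (m + (k + 1) * h) * F (m - h) ≤ F (m + k * h) * F m := by
    intro h hh k
    induction k with
    | zero => have := lc m h; simp; nlinarith
    | succ k ih =>
      have h1 := lc (m + (k + 1) * h) h
      rw [show m + ((k:ℝ) + 1) * h + h = m + (k + 1 + 1) * h by ring,
        show m + ((k:ℝ) + 1) * h - h = m + k * h by ring] at h1
      push_cast
      set a := F (m + (k + 1 + 1) * h)
      set b := F (m + (k + 1) * h)
      set c := F (m + k * h)
      have hc : 0 < c := by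
        have : F m ≤ c := mono (by have : 0 ≤ (k:ℝ) * h := by positivity
                                   linarith)
        linarith
      have h2 : c * (a * F (m - h)) ≤ c * (b * F m) := by
        calc c * (a * F (m - h)) = (a * c) * F (m - h) := by ring
          _ ≤ b ^ 2 * F (m - h) := by gcongr; exact F0 _
          _ = b * (b * F (m - h)) := by ring
          _ ≤ b * (c * F m) := by gcongr; exact F0 _
          _ = _ := by ring
      exact le_of_mul_le_mul_left h2 hc
  have step : ∀ x h : ℝ, 0 < h → (∃ k : ℕ, m + k * h = x) →
      (F (x + h) - F x) * F (m - h) ≤ C * h * (1 - F (m - h)) := by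
    rintro x h hh ⟨k, rfl⟩
    have h1 := chain h hh k
    rw [show m + ((k:ℝ) + 1) * h = m + k * h + h by ring] at h1
    have h2 := hz (m - h) m (by linarith)
    rw [show m - (m - h) = h by ring] at h2
    have h3 : F (m + k * h) * (F m - F (m - h)) ≤ 1 * (F m - F (m - h)) := by
      apply mul_le_mul_of_nonneg_right (F1 _)
      linarith [mono (show m - h ≤ m by linarith)]
    linarith
  intro x y hxy
  refine image_le_of_liminf_slope_right_le_deriv_boundary (f := F) (a := x) (b := y)
    (B := fun t => F x + C * (t - x)) (B' := fun _ => C) hcont.continuousOn (by simp)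
    (by fun_prop) ?_ ?_ ⟨hxy, le_rfl⟩
  · intro t _
    have : HasDerivAt (fun t => F x + C * (t - x)) (C * 1) t :=
      (((hasDerivAt_id t).sub_const x).const_mul C).const_add (F x)
    rw [mul_one] at this
    exact this.hasDerivWithinAt
  · intro t _ r hr
    rcases lt_or_ge t m with htm | htm
    · apply Filter.Eventually.frequently
      filter_upwards [Ioc_mem_nhdsGT htm] with z hzz
      have hpos : 0 < z - t := by linarith [hzz.1]
      rw [slope_def_field, div_lt_iff₀ hpos]
      calc F z - F t ≤ 2 * max z 1 * (z - t) * (1 - F t) := hz t z hzz.1.le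
        _ ≤ 2 * max z 1 * (z - t) * 1 := by
          apply mul_le_mul_of_nonneg_left (by linarith [F0 t])
          apply mul_nonneg (by positivity) (by linarith)
        _ ≤ C * (z - t) := by
          rw [mul_one]
          apply mul_le_mul_of_nonneg_right _ (by linarith)
          rw [hC]
          gcongr
          exact hzz.2
        _ < r * (z - t) := by gcongr
    · obtain ⟨u, hu0, hu, huk⟩ : ∃ u : ℕ → ℝ, (∀ n, 0 < u n) ∧
          Filter.Tendsto u Filter.atTop (nhds 0) ∧ ∀ n, ∃ k : ℕ, m + k * u n = t := by
        rcases htm.eq_or_lt with h | h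
        · refine ⟨fun n => 1 / ((n:ℝ) + 1), fun n => by positivity,
            tendsto_one_div_add_atTop_nhds_zero_nat, fun n => ⟨0, by simp [h]⟩⟩
        · refine ⟨fun n => (t - m) * (1 / ((n:ℝ) + 1)), fun n => ?_, ?_, fun n => ⟨n + 1, ?_⟩⟩
          · have : 0 < t - m := by linarith
            positivity
          · simpa using tendsto_one_div_add_atTop_nhds_zero_nat.const_mul (t - m)
          · have : (n:ℝ) + 1 ≠ 0 := by positivity
            push_cast
            field_simp
            ring
      have hT : Filter.Tendsto (fun n => t + u n) Filter.atTop (nhdsWithin t (Set.Ioi t)) := by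
        apply tendsto_nhdsWithin_of_tendsto_nhds_of_eventually_within
        · simpa using hu.const_add t
        · exact Filter.Eventually.of_forall fun n => by simp [hu0 n]
      apply hT.frequently
      apply Filter.Eventually.frequently
      have hlim : Filter.Tendsto (fun n => F (m - u n)) Filter.atTop (nhds (F m)) := by
        have : Filter.Tendsto (fun n => m - u n) Filter.atTop (nhds m) := by
          simpa using hu.const_sub m
        exact (hcont.tendsto m).comp this
      have h1 : Filter.Tendsto (fun n => C * (1 - F (m - u n))) Filter.atTop
        (nhds (C * (1 - F m))) := (hlim.const_sub 1).const_mul C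
      have h2 : Filter.Tendsto (fun n => r * F (m - u n)) Filter.atTop
        (nhds (r * F m)) := hlim.const_mul r
      have hlt : C * (1 - F m) < r * F m := by nlinarith
      filter_upwards [h1.eventually_lt h2 hlt, hlim.eventually_const_lt
        (show 0 < F m by linarith)] with n hn hn2
      have hs := step t (u n) (hu0 n) (huk n)
      rw [slope_def_field, add_sub_cancel_left, div_lt_iff₀ (hu0 n)]
      have h3 : (F (t + u n) - F t) * F (m - u n) < (r * u n) * F (m - u n) := by
        calc _ ≤ C * u n * (1 - F (m - u n)) := hs
          _ = u n * (C * (1 - F (m - u n))) := by ring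
          _ < u n * (r * F (m - u n)) := by gcongr; exact hu0 n
          _ = _ := by ring
      exact lt_of_mul_lt_mul_right h3 hn2.le


theorem le_of_Ioc (μ : Measure ℝ) [IsProbabilityMeasure μ] (C : ℝ) (hC : 0 ≤ C)
    (h : ∀ x y, x ≤ y → μ (Set.Ioc x y) ≤ ENNReal.ofReal (C * (y - x))) :
    μ ≤ ENNReal.ofReal C • (volume : Measure ℝ) := by
  refine Measure.le_iff.2 fun s hs => ?_
  let G : StieltjesFunction ℝ :=
    { toFun := fun x => C * x - cdf μ x
      mono' := by
        intro x y hxy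
        have h1 := h x y hxy
        have h2 : μ (Set.Ioc x y) = ENNReal.ofReal (cdf μ y - cdf μ x) := by
          conv_lhs => rw [← measure_cdf μ]
          rw [StieltjesFunction.measure_Ioc]
        rw [h2] at h1
        have h3 := (ENNReal.ofReal_le_ofReal_iff
          (mul_nonneg hC (sub_nonneg.2 hxy))).1 h1
        simp only
        linarith
      right_continuous' := by
        intro x
        exact ((continuous_const.mul continuous_id).continuousWithinAt).sub
          ((cdf μ).right_continuous x) }
  have e : G.measure + μ = ENNReal.ofReal C • (volume : Measure ℝ) := by
    conv_lhs => rw [← measure_cdf μ]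
    rw [← StieltjesFunction.measure_add]
    refine Measure.ext_of_Ioc _ _ fun a b hab => ?_
    rw [StieltjesFunction.measure_Ioc, Measure.smul_apply, Real.volume_Ioc, smul_eq_mul,
      ← ENNReal.ofReal_mul hC]
    congr 1
    simp only [StieltjesFunction.add_apply]
    change C * b - cdf μ b + cdf μ b - (C * a - cdf μ a + cdf μ a) = _
    ring
  rw [← e, Measure.add_apply]
  exact le_add_self

theorem density_of_Ioc (μ : Measure ℝ) [IsProbabilityMeasure μ] (C : ℝ) (hC : 0 ≤ C)
    (h : ∀ x y, x ≤ y → μ (Set.Ioc x y) ≤ ENNReal.ofReal (C * (y - x))) :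
    ∃ f : ℝ → ℝ, Measurable f ∧ (∀ x, 0 ≤ f x) ∧
      μ = (volume : Measure ℝ).withDensity (fun x => ENNReal.ofReal (f x)) ∧ ∀ x, f x ≤ C := by
  have hle := le_of_Ioc μ C hC h
  have hac : μ ≪ (volume : Measure ℝ) := by
    refine Measure.AbsolutelyContinuous.mk fun s hs h0 => ?_
    have := hle s
    rw [Measure.smul_apply, h0, smul_zero] at this
    exact le_antisymm this (zero_le)
  have hw := Measure.withDensity_rnDeriv_eq μ volume hac
  have hae : μ.rnDeriv volume ≤ᵐ[volume] fun _ => ENNReal.ofReal C := by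
    refine ae_le_of_forall_setLIntegral_le_of_sigmaFinite (Measure.measurable_rnDeriv _ _)
      fun s hs _ => ?_
    rw [← withDensity_apply _ hs, hw, setLIntegral_const]
    exact hle s
  refine ⟨fun x => min (μ.rnDeriv volume x).toReal C,
    (Measure.measurable_rnDeriv _ _).ennreal_toReal.min measurable_const,
    fun x => le_min ENNReal.toReal_nonneg hC, ?_, fun x => min_le_right _ _⟩
  conv_lhs => rw [← hw]
  refine withDensity_congr_ae ?_
  filter_upwards [hae] with x hx
  rw [min_eq_left (ENNReal.toReal_le_of_le_ofReal hC hx),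
    ENNReal.ofReal_toReal (ne_top_of_le_ne_top ENNReal.ofReal_ne_top hx)]

theorem gaussian_law {Ω : Type*} {mΩ : MeasurableSpace Ω} {P : Measure Ω}
    [IsProbabilityMeasure P] {d : ℕ} (Z : Ω → (Fin d → ℝ)) (hZmeas : Measurable Z)
    (hgauss : ∀ t : Fin d → ℝ, ∃ (μ : ℝ) (v : ℝ≥0),
      P.map (fun ω => ∑ j, t j * Z ω j) = gaussianReal μ v) : HasGaussianLaw Z P := by
  refine ⟨isGaussian_of_map_eq_gaussianReal fun L => ?_⟩
  obtain ⟨a, v, h⟩ := hgauss fun j => L (Pi.single j 1)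
  refine ⟨a, v, ?_⟩
  rw [← h, Measure.map_map (by fun_prop) hZmeas]
  congr 1
  ext ω
  simp only [Function.comp]
  conv_lhs => rw [← Finset.univ_sum_single (Z ω), map_sum]
  refine Finset.sum_congr rfl fun j _ => ?_
  rw [mul_comm, ← smul_eq_mul, ← map_smul]
  congr 1
  ext i
  by_cases hij : i = j
  · subst hij; simp
  · simp [hij]

theorem fsup_le_iff {d : ℕ} (hd : 1 ≤ d) (z : Fin d → ℝ) (s : ℝ) :
    (⨆ j, z j) ≤ s ↔ ∀ j, z j ≤ s := by
  haveI : Nonempty (Fin d) := ⟨⟨0, hd⟩⟩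
  exact ciSup_le_iff (Set.finite_range z).bddAbove

theorem meas_sup {Ω : Type*} {mΩ : MeasurableSpace Ω} {d : ℕ} (hd : 1 ≤ d)
    (Z : Ω → (Fin d → ℝ)) (hZ : Measurable Z) : Measurable (fun ω => ⨆ j, Z ω j) := by
  refine measurable_of_Iic fun s => ?_
  have : (fun ω => ⨆ j, Z ω j) ⁻¹' Set.Iic s = ⋂ j, {ω | Z ω j ≤ s} := by
    ext ω
    simp only [Set.mem_preimage, Set.mem_Iic, Set.mem_iInter, Set.mem_ofPred_eq]
    exact fsup_le_iff hd _ _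
  rw [this]
  exact MeasurableSet.iInter fun j =>
    measurableSet_le ((measurable_pi_apply j).comp hZ) measurable_const

theorem logconc {Ω : Type*} {mΩ : MeasurableSpace Ω} {P : Measure Ω}
    [IsProbabilityMeasure P] {d : ℕ} (hd : 1 ≤ d) (Z : Ω → (Fin d → ℝ)) (hZ : Measurable Z)
    (hG : HasGaussianLaw Z P) (a b : ℝ) :
    P {ω | (⨆ j, Z ω j) ≤ a} * P {ω | (⨆ j, Z ω j) ≤ b} ≤
      P {ω | (⨆ j, Z ω j) ≤ (a + b) / 2} ^ 2 := by
  let T : Ω → EuclideanSpace ℝ (Fin d) := fun ω => WithLp.toLp 2 (Z ω)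
  have hT : Measurable T := (WithLp.measurable_toLp 2 _).comp hZ
  have hG2 : HasGaussianLaw T P :=
    hG.map_equiv (PiLp.continuousLinearEquiv 2 ℝ (fun _ : Fin d => ℝ)).symm
  haveI := hG2.isGaussian_map
  let A : ℝ → Set (EuclideanSpace ℝ (Fin d)) := fun s => {z | ∀ j, z j ≤ s}
  have hA : ∀ s, MeasurableSet (A s) := by
    intro s
    have : A s = ⋂ j, {z : EuclideanSpace ℝ (Fin d) | z j ≤ s} := by
      ext z; simp [A]
    rw [this]
    exact MeasurableSet.iInter fun j => measurableSet_le (by fun_prop) measurable_const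
  have hi : ∀ s x, (A s).indicator (1 : EuclideanSpace ℝ (Fin d) → ℝ≥0∞) x ≤ 1 := by
    intro s x
    exact Set.indicator_le_self' (fun _ _ => zero_le) x
  have key := plm_gaussian (P.map T) ((A a).indicator 1) ((A b).indicator 1)
    ((A ((a + b) / 2)).indicator 1) (measurable_one.indicator (hA _))
    (measurable_one.indicator (hA _)) (measurable_one.indicator (hA _)) (hi _) (hi _) (hi _) (by
      intro x y
      by_cases hx : x ∈ A a
      · by_cases hy : y ∈ A b
        · have : (1/2:ℝ) • (x+y) ∈ A ((a + b) / 2) := by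
            intro j
            have h1 := hx j
            have h2 := hy j
            simp only [PiLp.smul_apply, PiLp.add_apply, smul_eq_mul]
            linarith
          rw [Set.indicator_of_mem hx, Set.indicator_of_mem hy, Set.indicator_of_mem this]
          simp
        · rw [Set.indicator_of_notMem hy]; simp
      · rw [Set.indicator_of_notMem hx]; simp)
  rw [lintegral_indicator_one (hA _), lintegral_indicator_one (hA _),
    lintegral_indicator_one (hA _), Measure.map_apply hT (hA _), Measure.map_apply hT (hA _),
    Measure.map_apply hT (hA _)] at key
  have e : ∀ s, T ⁻¹' A s = {ω | (⨆ j, Z ω j) ≤ s} := by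
    intro s
    ext ω
    exact (fsup_le_iff hd (Z ω) s).symm
  rwa [e, e, e] at key

theorem core {Ω : Type*} {mΩ : MeasurableSpace Ω} {P : Measure Ω}
    [IsProbabilityMeasure P] {d : ℕ} (hd : 1 ≤ d) (Z : Ω → (Fin d → ℝ)) (hZ : Measurable Z)
    (hG : HasGaussianLaw Z P) (hmean : ∀ j, 0 ≤ ∫ ω, Z ω j ∂P)
    (hvar : ∀ j, Var[fun ω => Z ω j; P] = 1) (m : ℝ)
    (hm : (1 : ℝ≥0∞) / 2 ≤ P {ω | (⨆ j, Z ω j) ≤ m}) (x y : ℝ) (hxy : x ≤ y) :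
    P {ω | (⨆ j, Z ω j) ∈ Set.Ioc x y} ≤ ENNReal.ofReal (2 * max m 1 * (y - x)) := by
  have hS := meas_sup hd Z hZ
  have hms : ∀ s, MeasurableSet {ω | (⨆ j, Z ω j) ≤ s} := fun s => hS measurableSet_Iic
  let F : ℝ → ℝ := fun s => P.real {ω | (⨆ j, Z ω j) ≤ s}
  have mono : Monotone F := by
    intro a b hab
    exact measureReal_mono fun ω (hω : _ ≤ a) => le_trans hω hab
  have hIoc : ∀ x y, x ≤ y → P.real {ω | (⨆ j, Z ω j) ∈ Set.Ioc x y} = F y - F x := by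
    intro x y hxy
    have : {ω | (⨆ j, Z ω j) ∈ Set.Ioc x y} =
        {ω | (⨆ j, Z ω j) ≤ y} \ {ω | (⨆ j, Z ω j) ≤ x} := by
      ext ω
      simp only [Set.mem_ofPred_eq, Set.mem_Ioc, Set.mem_sdiff, not_le]
      tauto
    have hsub : {ω | (⨆ j, Z ω j) ≤ x} ⊆ {ω | (⨆ j, Z ω j) ≤ y} :=
      fun ω (hω : _ ≤ x) => le_trans hω hxy
    rw [this, measureReal_sdiff hsub (hms x)]
  have hIoi : ∀ x, P.real {ω | (⨆ j, Z ω j) ∈ Set.Ioi x} = 1 - F x := by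
    intro x
    have : {ω | (⨆ j, Z ω j) ∈ Set.Ioi x} = {ω | (⨆ j, Z ω j) ≤ x}ᶜ := by
      ext ω
      simp only [Set.mem_ofPred_eq, Set.mem_Ioi, Set.mem_compl_iff, not_le]
    rw [this, probReal_compl_eq_one_sub (hms x)]
  have fin := analytic_part F mono (fun _ => measureReal_nonneg) (fun _ => measureReal_le_one)
    (by
      intro x y hxy
      have h1 := hazardS hd hZ hG hmean hvar x y
      have h0 : 0 ≤ 2 * max y 1 * (y - x) :=
        mul_nonneg (by positivity) (sub_nonneg.2 hxy)
      have h2 := ENNReal.toReal_mono (ENNReal.mul_ne_top ENNReal.ofReal_ne_top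
        (measure_ne_top _ _)) h1
      rw [ENNReal.toReal_mul, ENNReal.toReal_ofReal h0] at h2
      rw [← hIoc x y hxy, ← hIoi x]
      exact h2)
    (by
      intro x h
      have h1 := logconc hd Z hZ hG (x + h) (x - h)
      rw [show (x + h + (x - h)) / 2 = x by ring] at h1
      have h2 := ENNReal.toReal_mono (ENNReal.pow_ne_top (measure_ne_top _ _)) h1
      rw [ENNReal.toReal_mul, ENNReal.toReal_pow] at h2
      exact h2)
    m (by
      have := ENNReal.toReal_mono (measure_ne_top _ _) hm
      have e : ((1 : ℝ≥0∞) / 2).toReal = 1 / 2 := by simp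
      rw [e] at this
      exact this) x y hxy
  rw [← ofReal_measureReal (measure_ne_top _ _), hIoc x y hxy]
  exact ENNReal.ofReal_le_ofReal (by linarith)



/-- Supplemental Lemma (lm:auxdensity): if `Z ∈ ℝ^d` is jointly Gaussian with `E[Z_j] ≥ 0`
and `Var(Z_j) = σ² > 0` for all `j`, `S = max_j Z_j`, and `m` is a median of `S`, then the
law of `S` is absolutely continuous with a density bounded by `(2/σ) max{m/σ, 1}`. -/
theorem stmt_10 (d : ℕ) (hd : 1 ≤ d) (σ : ℝ) (hσ : 0 < σ)
    (Ω : Type) (mΩ : MeasurableSpace Ω) (P : Measure Ω) [IsProbabilityMeasure P]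
    (Z : Ω → (Fin d → ℝ)) (hZmeas : Measurable Z)
    (hgauss : ∀ t : Fin d → ℝ, ∃ (μ : ℝ) (v : ℝ≥0),
      P.map (fun ω => ∑ j, t j * Z ω j) = gaussianReal μ v)
    (hmean : ∀ j, 0 ≤ ∫ ω, Z ω j ∂P)
    (hvar : ∀ j, ∫ ω, (Z ω j - ∫ ω', Z ω' j ∂P) ^ 2 ∂P = σ ^ 2)
    (m : ℝ)
    (hmed1 : (1 : ℝ≥0∞) / 2 ≤ P {ω | (⨆ j, Z ω j) ≤ m})
    (hmed2 : (1 : ℝ≥0∞) / 2 ≤ P {ω | m ≤ ⨆ j, Z ω j}) :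
    ∃ f : ℝ → ℝ, Measurable f ∧ (∀ x, 0 ≤ f x) ∧
      P.map (fun ω => ⨆ j, Z ω j) =
        MeasureTheory.volume.withDensity (fun x => ENNReal.ofReal (f x)) ∧
      ∀ x, f x ≤ 2 / σ * max (m / σ) 1 := by
  have hS := meas_sup hd Z hZmeas
  have hG := gaussian_law Z hZmeas hgauss
  have hσi : 0 < σ⁻¹ := inv_pos.2 hσ
  have hC : 0 ≤ 2 / σ * max (m / σ) 1 := by positivity
  haveI : IsProbabilityMeasure (P.map fun ω => ⨆ j, Z ω j) :=
    Measure.isProbabilityMeasure_map hS.aemeasurable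
  refine density_of_Ioc _ _ hC fun x y hxy => ?_
  rw [Measure.map_apply hS measurableSet_Ioc]
  have hsup : ∀ ω, (⨆ j, (fun ω => σ⁻¹ • Z ω) ω j) = σ⁻¹ * ⨆ j, Z ω j := by
    intro ω
    rw [Real.mul_iSup_of_nonneg hσi.le]
    rfl
  have key := core hd (fun ω => σ⁻¹ • Z ω) (hZmeas.const_smul σ⁻¹) (hG.fun_smul σ⁻¹)
    (by
      intro j
      simp only [Pi.smul_apply, smul_eq_mul]
      rw [integral_const_mul]
      exact mul_nonneg hσi.le (hmean j))
    (by
      intro j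
      simp only [Pi.smul_apply, smul_eq_mul]
      have hj : Measurable fun ω => Z ω j := (measurable_pi_apply j).comp hZmeas
      rw [variance_const_mul, variance_eq_integral hj.aemeasurable]
      rw [hvar j]
      field_simp)
    (σ⁻¹ * m)
    (by
      refine hmed1.trans (measure_mono fun ω hω => ?_)
      rw [Set.mem_ofPred_eq, hsup]
      exact mul_le_mul_of_nonneg_left hω hσi.le)
    (σ⁻¹ * x) (σ⁻¹ * y) (mul_le_mul_of_nonneg_left hxy hσi.le)
  refine (measure_mono fun ω hω => ?_).trans (key.trans (ENNReal.ofReal_le_ofReal (le_of_eq ?_)))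
  · rw [Set.mem_ofPred_eq, hsup]
    exact ⟨mul_lt_mul_of_pos_left hω.1 hσi, mul_le_mul_of_nonneg_left hω.2 hσi.le⟩
  · rw [show σ⁻¹ * m = m / σ by rw [div_eq_inv_mul], div_eq_mul_inv 2 σ]
    ring
end

section
/- Let G be the Moore–Penrose pseudoinverse of AAᵀ, let Ω be a symmetric p×p real matrix, and let v ∈ ℝ^d. Then sup{ ⟨AᵀG s, v⟩ : s ∈ ℝ^p, AᵀG s ≤ 0, ‖Ω G s‖₁ ≤ 1 } = sup{ ⟨AᵀA x, v⟩ : x ∈ ℝ^d, AᵀA x ≤ 0, ‖Ω A x‖₁ ≤ 1 }. -/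
open Matrix

/-- Display (eq:tnpos-intermediate): for `G` the Moore–Penrose pseudoinverse of `A Aᵀ`, a
symmetric matrix `Ω`, and any `v ∈ ℝ^d`,
`sup{⟨Aᵀ G s, v⟩ : Aᵀ G s ≤ 0, ‖Ω G s‖₁ ≤ 1} = sup{⟨Aᵀ A x, v⟩ : Aᵀ A x ≤ 0, ‖Ω A x‖₁ ≤ 1}`. -/
theorem stmt_12 (p d : ℕ) (A : Matrix (Fin p) (Fin d) ℝ) (G Ω : Matrix (Fin p) (Fin p) ℝ)
    (hΩ : Ωᵀ = Ω)
    (hG1 : A * Aᵀ * G * (A * Aᵀ) = A * Aᵀ) (hG2 : G * (A * Aᵀ) * G = G)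
    (hG3 : (A * Aᵀ * G)ᵀ = A * Aᵀ * G) (hG4 : (G * (A * Aᵀ))ᵀ = G * (A * Aᵀ))
    (v : Fin d → ℝ) :
    sSup {r : ℝ | ∃ s : Fin p → ℝ, (∀ i, Aᵀ.mulVec (G.mulVec s) i ≤ 0) ∧
        (∑ i, |Ω.mulVec (G.mulVec s) i|) ≤ 1 ∧ r = Aᵀ.mulVec (G.mulVec s) ⬝ᵥ v} =
      sSup {r : ℝ | ∃ x : Fin d → ℝ, (∀ i, Aᵀ.mulVec (A.mulVec x) i ≤ 0) ∧
        (∑ i, |Ω.mulVec (A.mulVec x) i|) ≤ 1 ∧ r = Aᵀ.mulVec (A.mulVec x) ⬝ᵥ v} := by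
  have e1 : G = A * (Aᵀ * Gᵀ * G) := by
    have h : G * (A * Aᵀ) = A * Aᵀ * Gᵀ := by
      rw [← hG4]; simp [Matrix.transpose_mul]
    calc G = G * (A * Aᵀ) * G := hG2.symm
      _ = A * Aᵀ * Gᵀ * G := by rw [h]
      _ = _ := by simp only [Matrix.mul_assoc]
  have e2 : G * (A * Aᵀ) * A = A := by
    have h : G * (A * Aᵀ) * (A * Aᵀ) = A * Aᵀ := by
      have h1 := congrArg Matrix.transpose hG1
      rw [Matrix.mul_assoc (A * Aᵀ) G, Matrix.transpose_mul, hG4] at h1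
      simpa [Matrix.transpose_mul] using h1
    have h2 : (G * (A * Aᵀ) - 1) * (A * Aᴴ) = 0 := by
      rw [Matrix.conjTranspose_eq_transpose_of_trivial, Matrix.sub_mul, h, Matrix.one_mul, sub_self]
    rw [Matrix.mul_self_mul_conjTranspose_eq_zero, Matrix.sub_mul, Matrix.one_mul, sub_eq_zero] at h2
    exact h2
  congr 1
  ext r
  constructor
  · rintro ⟨s, h⟩
    refine ⟨(Aᵀ * Gᵀ * G).mulVec s, ?_⟩
    rw [Matrix.mulVec_mulVec s A, ← e1]
    exact h
  · rintro ⟨x, h⟩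
    refine ⟨(A * Aᵀ * A).mulVec x, ?_⟩
    rw [Matrix.mulVec_mulVec x G, ← Matrix.mul_assoc G, e2]
    exact h
end

section
/- Let Ω̂ and Ω be symmetric p×p real matrices with Ω = Ω Ω̂† Ω̂, let M be any p×p real matrix, and define V̂ = {s ∈ ℝ^p : ‖Ω̂ M s‖₁ ≤ 1}. Then sup_{s ∈ V̂} ‖Ω M s‖₁ ≤ 1 + ‖(Ω̂ − Ω) Ω̂†‖_{o,1}. -/
open Matrix

/-- The operator norm `‖T‖_{o,1} = sup_{‖v‖₁ ≤ 1} ‖T v‖₁` of a square matrix. -/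
noncomputable def l1OpNorm {p : ℕ} (T : Matrix (Fin p) (Fin p) ℝ) : ℝ :=
  sSup {r : ℝ | ∃ v : Fin p → ℝ, (∑ i, |v i|) ≤ 1 ∧ r = ∑ i, |T.mulVec v i|}

/-- Display (th:master2) in the proof of Theorem S.B: if `Ω̂`, `Ω` are symmetric with
`Ω = Ω Ω̂† Ω̂`, then for every `s` with `‖Ω̂ M s‖₁ ≤ 1` one has
`‖Ω M s‖₁ ≤ 1 + ‖(Ω̂ − Ω) Ω̂†‖_{o,1}`. -/
theorem stmt_17 (p : ℕ) (Ωhat Ω Ωhatd M : Matrix (Fin p) (Fin p) ℝ)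
    (hs1 : Ωhatᵀ = Ωhat) (hs2 : Ωᵀ = Ω)
    (hd1 : Ωhat * Ωhatd * Ωhat = Ωhat) (hd2 : Ωhatd * Ωhat * Ωhatd = Ωhatd)
    (hd3 : (Ωhat * Ωhatd)ᵀ = Ωhat * Ωhatd) (hd4 : (Ωhatd * Ωhat)ᵀ = Ωhatd * Ωhat)
    (hcons : Ω = Ω * Ωhatd * Ωhat) :
    ∀ s : Fin p → ℝ, (∑ i, |Ωhat.mulVec (M.mulVec s) i|) ≤ 1 →
      (∑ i, |Ω.mulVec (M.mulVec s) i|) ≤ 1 + l1OpNorm ((Ωhat - Ω) * Ωhatd) := by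
  intro s hs
  have hbdd : BddAbove {r : ℝ | ∃ v : Fin p → ℝ, (∑ i, |v i|) ≤ 1 ∧
      r = ∑ i, |((Ωhat - Ω) * Ωhatd).mulVec v i|} := by
    generalize (Ωhat - Ω) * Ωhatd = T
    refine ⟨∑ i, ∑ j, |T i j|, ?_⟩
    rintro r ⟨v, hv, rfl⟩
    refine Finset.sum_le_sum fun i _ => ?_
    have h1 : |T.mulVec v i| ≤ ∑ j, |T i j * v j| :=
      Finset.abs_sum_le_sum_abs (fun j => T i j * v j) Finset.univ
    refine h1.trans (Finset.sum_le_sum fun j _ => ?_)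
    rw [abs_mul]
    have hj : |v j| ≤ 1 :=
      (Finset.single_le_sum (f := fun i => |v i|) (fun i _ => abs_nonneg _)
        (Finset.mem_univ j)).trans hv
    exact mul_le_of_le_one_right (abs_nonneg _) hj
  have hle := le_csSup hbdd ⟨Ωhat.mulVec (M.mulVec s), hs, rfl⟩
  have hmul : (Ωhat - Ω) * Ωhatd * Ωhat = Ωhat - Ω := by
    rw [Matrix.sub_mul, Matrix.sub_mul, hd1, ← hcons]
  have hkey : ((Ωhat - Ω) * Ωhatd).mulVec (Ωhat.mulVec (M.mulVec s))
      = Ωhat.mulVec (M.mulVec s) - Ω.mulVec (M.mulVec s) := by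
    rw [Matrix.mulVec_mulVec, hmul, Matrix.sub_mulVec]
  rw [hkey] at hle
  refine le_trans ?_ (add_le_add hs hle)
  rw [← Finset.sum_add_distrib]
  refine Finset.sum_le_sum fun i _ => ?_
  rw [Pi.sub_apply]
  have := abs_sub (Ωhat.mulVec (M.mulVec s) i)
    (Ωhat.mulVec (M.mulVec s) i - Ω.mulVec (M.mulVec s) i)
  rwa [sub_sub_cancel] at this
end
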